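/- Let M be a compact metric space, f : M → M continuous, and φ : M → ℝ continuous. Suppose there is a real number c such that ∫ φ dμ = c for every f-invariant Borel probability measure μ. Then the Birkhoff averages (1/n) ∑_{i=0}^{n-1} φ(fⁱ(x)) converge to c uniformly in x ∈ M as n → ∞. -/

import Mathlib

open MeasureTheory

/-!
The empirical measures of orbit segments of length `n` are `O(1 / n)`-almost `f`-invariant, because
the Birkhoff sums along the orbits of `x` and of `f x` differ in two terms only. By weak compactness
of the probability measures, they converge along every ultrafilter on pairs `(n, x)` with `n → ∞`,
and the limit is invariant. Hence `c` is the only ultrafilter limit of the Birkhoff averages of `φ`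
as `n → ∞`, with no control on `x`, and this is uniform convergence.
-/

open Filter Topology
open scoped NNReal BoundedContinuousFunction

section Birkhoff

variable {X : Type*}

theorem birkhoffAverage_comp_apply (R : Type*) [DivisionSemiring R] {M : Type*} [AddCommMonoid M]
    [Module R M] (f : X → X) (g : X → M) (n : ℕ) (x : X) :
    birkhoffAverage R f (g ∘ f) n x = birkhoffAverage R f g n (f x) := by
  simp only [birkhoffAverage, birkhoffSum, Function.comp_apply,
    (Function.Commute.iterate_self f _).eq x]

theorem tendstoUniformly_birkhoffAverage_apply_sub_birkhoffAverage (𝕜 : Type*) [RCLike 𝕜]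
    {E : Type*} [NormedAddCommGroup E] [NormedSpace 𝕜 E] {g : X → E}
    (hg : Bornology.IsBounded (Set.range g)) (f : X → X) :
    TendstoUniformly (fun n x ↦ birkhoffAverage 𝕜 f g n (f x) - birkhoffAverage 𝕜 f g n x)
      (fun _ ↦ 0) atTop := by
  obtain ⟨C, hC⟩ := Metric.isBounded_range_iff.1 hg
  have hlim : Tendsto (fun n : ℕ ↦ C / n) atTop (𝓝 0) :=
    tendsto_const_nhds.div_atTop tendsto_natCast_atTop_atTop
  have hbound (n : ℕ) (x : X) :
      ‖birkhoffAverage 𝕜 f g n (f x) - birkhoffAverage 𝕜 f g n x‖ ≤ C / n := by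
    rw [← dist_eq_norm, dist_birkhoffAverage_apply_birkhoffAverage]
    gcongr
    exact hC _ _
  exact tendsto_prod_top_iff.1 <|
    squeeze_zero_norm (fun p ↦ hbound p.1 p.2) (hlim.comp tendsto_fst)

end Birkhoff

section EmpiricalMeasure

variable {X : Type*} [MeasurableSpace X]

/-- The empirical measure `(1 / n) ∑_{i < n} δ_{fⁱ(x)}` of an orbit segment of length `n`, as a
Birkhoff average of Dirac measures. It is a `FiniteMeasure`, since it is `0` for `n = 0`. -/
noncomputable def empiricalMeasure (f : X → X) (n : ℕ) (x : X) : FiniteMeasure X :=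
  birkhoffAverage ℝ≥0 f (fun y ↦ (diracProba y).toFiniteMeasure) n x

theorem toMeasure_empiricalMeasure (f : X → X) (n : ℕ) (x : X) :
    (empiricalMeasure f n x : Measure X) =
      (n : ℝ≥0)⁻¹ • ∑ i ∈ Finset.range n, Measure.dirac (f^[i] x) := by
  simp only [empiricalMeasure, birkhoffAverage, birkhoffSum, FiniteMeasure.toMeasure_smul,
    FiniteMeasure.toMeasure_sum]
  rfl

theorem integral_empiricalMeasure {E : Type*} [NormedAddCommGroup E] [NormedSpace ℝ E]
    [CompleteSpace E] {g : X → E} (hg : StronglyMeasurable g) (f : X → X) (n : ℕ) (x : X) :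
    ∫ y, g y ∂(empiricalMeasure f n x : Measure X) = birkhoffAverage ℝ f g n x := by
  rw [toMeasure_empiricalMeasure, integral_smul_nnreal_measure,
    integral_finsetSum_measure fun i _ ↦ integrable_dirac' hg enorm_lt_top]
  simp only [integral_dirac' g _ hg, birkhoffAverage, birkhoffSum, NNReal.smul_def,
    NNReal.coe_inv, NNReal.coe_natCast]

theorem mass_empiricalMeasure (f : X → X) {n : ℕ} (hn : n ≠ 0) (x : X) :
    (empiricalMeasure f n x).mass = 1 := by
  rw [← ENNReal.coe_inj, FiniteMeasure.ennreal_mass, toMeasure_empiricalMeasure]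
  simp [ENNReal.smul_def, ENNReal.inv_mul_cancel, hn]

variable [TopologicalSpace X] [HasOuterApproxClosed X] [BorelSpace X] {f : X → X}

theorem measurePreserving_of_tendsto_empiricalMeasure {ι : Type*} {l : Filter ι} [l.NeBot]
    {n : ι → ℕ} {x : ι → X} {μ : FiniteMeasure X} (hf : Continuous f) (hn : Tendsto n l atTop)
    (hμ : Tendsto (fun i ↦ empiricalMeasure f (n i) (x i)) l (𝓝 μ)) :
    MeasurePreserving f (μ : Measure X) μ := by
  refine ⟨hf.measurable, ext_of_forall_integral_eq_of_IsFiniteMeasure fun g ↦ ?_⟩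
  rw [integral_map hf.aemeasurable g.continuous.aestronglyMeasurable]
  have hlim (h : X →ᵇ ℝ) :
      Tendsto (fun i ↦ birkhoffAverage ℝ f h (n i) (x i)) l (𝓝 (∫ y, h y ∂(μ : Measure X))) := by
    simpa only [integral_empiricalMeasure h.continuous.stronglyMeasurable]
      using FiniteMeasure.tendsto_iff_forall_integral_tendsto.1 hμ h
  have hdiff : Tendsto (fun i ↦ birkhoffAverage ℝ f (g ∘ f) (n i) (x i) -
      birkhoffAverage ℝ f g (n i) (x i)) l (𝓝 0) := by
    have hunif := tendsto_prod_top_iff.2 <|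
      tendstoUniformly_birkhoffAverage_apply_sub_birkhoffAverage ℝ g.isBounded_range f
    simpa only [birkhoffAverage_comp_apply] using!
      hunif.comp (hn.prodMk (tendsto_top : Tendsto x l ⊤))
  exact sub_eq_zero.1 <| tendsto_nhds_unique
    ((hlim (g.compContinuous ⟨f, hf⟩)).sub (hlim g)) hdiff

variable [CompactSpace X] [T2Space X]

theorem exists_measurePreserving_tendsto_empiricalMeasure {ι : Type*} (U : Ultrafilter ι)
    {n : ι → ℕ} (hf : Continuous f) (hn : Tendsto n U atTop) (x : ι → X) :
    ∃ μ : FiniteMeasure X, IsProbabilityMeasure (μ : Measure X) ∧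
      MeasurePreserving f (μ : Measure X) μ ∧
      Tendsto (fun i ↦ empiricalMeasure f (n i) (x i)) U (𝓝 μ) := by
  have hmass : ∀ᶠ i in (U : Filter ι), (empiricalMeasure f (n i) (x i)).mass = 1 :=
    (hn.eventually_ne_atTop 0).mono fun i hi ↦ mass_empiricalMeasure f hi (x i)
  obtain ⟨μ, hμ_mass, hμ⟩ := (isCompact_setOfPred_finiteMeasure_eq_of_compactSpace X
    1).ultrafilter_le_nhds' (U.map fun i ↦ empiricalMeasure f (n i) (x i)) hmass
  have hμ_univ : (μ : Measure X) Set.univ = 1 := by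
    rw [← FiniteMeasure.ennreal_mass, show μ.mass = 1 from hμ_mass, ENNReal.coe_one]
  exact ⟨μ, ⟨hμ_univ⟩, measurePreserving_of_tendsto_empiricalMeasure hf hn hμ, hμ⟩

theorem stmt6_general (hf : Continuous f) {φ : X → ℝ} (hφ : Continuous φ) {c : ℝ}
    (hint : ∀ μ : Measure X, IsProbabilityMeasure μ → MeasurePreserving f μ μ → ∫ x, φ x ∂μ = c) :
    TendstoUniformly (birkhoffAverage ℝ f φ) (fun _ ↦ c) atTop := by
  refine tendsto_prod_top_iff.1 ((tendsto_iff_ultrafilter _ _ _).2 fun U hU ↦ ?_)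
  obtain ⟨μ, hμ_prob, hμ_inv, hμ⟩ := exists_measurePreserving_tendsto_empiricalMeasure U hf
    (tendsto_fst.mono_left hU) Prod.snd
  have hlim_integral := ((FiniteMeasure.continuous_integral_continuousMap
    (⟨φ, hφ⟩ : C(X, ℝ))).tendsto μ).comp hμ
  have hlim : Tendsto (fun p : ℕ × X ↦ birkhoffAverage ℝ f φ p.1 p.2) U (𝓝 c) := by
    simpa only [Function.comp_def, ContinuousMap.coe_mk, hint μ hμ_prob hμ_inv,
      integral_empiricalMeasure hφ.stronglyMeasurable] using hlim_integral
  exact hlim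

end EmpiricalMeasure

/-- If every `f`-invariant Borel probability measure on a compact metric space
assigns the same integral `c` to the continuous function `φ`, then the
Birkhoff averages of `φ` converge to `c` uniformly in `x`. -/
theorem stmt6 {M : Type*} [MetricSpace M] [CompactSpace M]
    [MeasurableSpace M] [BorelSpace M]
    (f : M → M) (hf : Continuous f) (φ : M → ℝ) (hφ : Continuous φ) (c : ℝ)
    (hint : ∀ μ : Measure M, IsProbabilityMeasure μ →
      MeasurePreserving f μ μ → (∫ x, φ x ∂μ) = c) :
    ∀ ε : ℝ, 0 < ε → ∃ N : ℕ, ∀ n ≥ N, 1 ≤ n → ∀ x : M,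
      |(1 / (n : ℝ)) * ∑ i ∈ Finset.range n, φ (f^[i] x) - c| < ε := by
  intro ε hε
  obtain ⟨N, hN⟩ := eventually_atTop.1
    (Metric.tendstoUniformly_iff.1 (stmt6_general hf hφ hint) ε hε)
  refine ⟨N, fun n hn _ x ↦ ?_⟩
  simpa only [dist_comm c, Real.dist_eq, birkhoffAverage, birkhoffSum, smul_eq_mul, one_div]
    using hN n hn x
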